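/- (Integration of the exact modulation system, original time.) Let 0 < α < 1 and β∞ > 0, and let P₁, P₂ be as in the construction of the approximate solution (P₁ contains only monomials of total degree ≥ 3; P₂ = −2bβ̃ plus monomials of total degree ≥ 3). Then there exist a time t_e < 0 and a constant g∞ > 0 with |g∞ − 1| small, together with a solution (λ_e, b_e, β̃_e, r_e, γ_e) on [t_e, 0) of the system λ_s/λ + b = P₁(b,β̃), r_s/λ + 2β = 0, β̃_s = P₂(b,β̃), γ_s = 1 + β², ds/dt = 1/λ², b = (2β/α)·(λ/r), β = β∞ + β̃, satisfying as t ↑ 0: b_e(t) = (1/(1+α))·(2(1+α)β∞/(α g∞))^{2/(1+α)}·|t|^{(1−α)/(1+α)}·(1 + O(log(|t|)·|t|^{(1−α)/(1+α)})), λ_e(t) = (2(1+α)β∞/(α g∞))^{1/(1+α)}·|t|^{1/(1+α)}·(1 + O(log(|t|)·|t|^{(1−α)/(1+α)})), r_e(t) = g∞·(2(1+α)β∞/(α g∞))^{α/(1+α)}·|t|^{α/(1+α)}·(1 + O(log(|t|)·|t|^{(1−α)/(1+α)})), β̃_e(t) = O(|t|^{2(1−α)/(1+α)}), and γ_e(t)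 = (1+β∞²)·((1−α)/(1+α))^{(1−α)/(1+α)}·(2(1−α)β∞/(α g∞))^{−2/(1+α)}·|t|^{−(1−α)/(1+α)} + O(log(|t|)). -/

import Mathlib

open Set

/-!
The variable `u` defined by `r = g∞ e^{-αu}`, so that `du = b ds`, is used as the independent
variable. Eliminating `λ` through `b = (2β/α)(λ/r)` leaves an autonomous system for `(b, β̃)`. With
`x = e^{-(1-α)u}`, `b = x B` and `β̃ = x² v`, its right-hand side is `O(x²)` for `B`, while `v` is
strongly attracted towards a bounded set; a rectangle in the `(B, v)` plane is therefore trapping,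
`B` converges, and a translation in `u` makes its limit the value `2β∞/(α g∞)` for which
`λ ∼ e^{-u}`. Integrating `dt = λ² du / b` and `dγ = (1 + β²) du / b` and inverting `t(u)` near
`t = 0` turns powers of `e^{-u}` into powers of `|t|`. All relative errors are
`O(e^{-2(1-α)u}) = O(|t|^{2(1-α)/(1+α)})`, which is `O(|log|t|| |t|^{(1-α)/(1+α)})`.
-/

open Asymptotics Filter Topology
open scoped NNReal

section ODE

variable {E : Type*} [NormedAddCommGroup E] [NormedSpace ℝ E] [CompleteSpace E]
  {f : ℝ → E → E} {K L : ℝ≥0} {a : ℝ}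

theorem exists_forall_Ioo_hasDerivAt_of_lipschitz_of_bounded
    (hlip : ∀ t, LipschitzWith K (f t)) (hcont : ∀ x, Continuous fun t => f t x)
    (hbdd : ∀ t x, ‖f t x‖ ≤ L) (t₀ : ℝ) (x₀ : E) {R : ℝ} (hR : 0 ≤ R) :
    ∃ Y : ℝ → E, Y t₀ = x₀ ∧ ∀ t ∈ Ioo (t₀ - R) (t₀ + R), HasDerivAt Y (f t (Y t)) t := by
  have hpl : IsPicardLindelof f (tmin := t₀ - R) (tmax := t₀ + R)
      ⟨t₀, by constructor <;> linarith⟩ x₀ (L * R.toNNReal) 0 L K :=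
    { lipschitzOnWith := fun t _ => (hlip t).lipschitzOnWith
      continuousOn := fun x _ => (hcont x).continuousOn
      norm_le := fun t _ x _ => hbdd t x
      mul_max_le := by simp [hR] }
  obtain ⟨Y, hY₀, hY⟩ := hpl.exists_eq_forall_mem_Icc_hasDerivWithinAt₀
  exact ⟨Y, hY₀, fun t ht =>
    (hY t (Ioo_subset_Icc_self ht)).hasDerivAt (Icc_mem_nhds ht.1 ht.2)⟩

theorem exists_forall_hasDerivAt_of_lipschitz_of_bounded
    (hlip : ∀ t, LipschitzWith K (f t)) (hcont : ∀ x, Continuous fun t => f t x)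
    (hbdd : ∀ t x, ‖f t x‖ ≤ L) (t₀ : ℝ) (x₀ : E) :
    ∃ X : ℝ → E, X t₀ = x₀ ∧ ∀ t, HasDerivAt X (f t (X t)) t := by
  choose Y hY₀ hY using fun n : ℕ => exists_forall_Ioo_hasDerivAt_of_lipschitz_of_bounded
    hlip hcont hbdd t₀ x₀ (n.cast_add_one_pos (α := ℝ)).le
  have hagree : ∀ m n : ℕ, m ≤ n → ∀ t ∈ Ioo (t₀ - (m + 1)) (t₀ + (m + 1)), Y m t = Y n t := by
    intro m n hmn
    have : (0 : ℝ) < m + 1 := m.cast_add_one_pos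
    have hmn' : (m : ℝ) ≤ n := Nat.cast_le.2 hmn
    exact ODE_solution_unique_of_mem_Ioo (v := f) (s := fun _ => univ) (K := K) (t₀ := t₀)
      (fun t _ => (hlip t).lipschitzOnWith) (by constructor <;> linarith)
      (fun t ht => ⟨hY m t ht, trivial⟩)
      (fun t ht => ⟨hY n t ⟨by linarith [ht.1], by linarith [ht.2]⟩, trivial⟩)
      (by rw [hY₀, hY₀])
  refine ⟨fun t => Y ⌈|t - t₀|⌉₊ t, by simp [hY₀], fun t => ?_⟩
  obtain ⟨N, hN⟩ := exists_nat_gt |t - t₀|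
  have hnear : (fun s => Y ⌈|s - t₀|⌉₊ s) =ᶠ[𝓝 t] Y N := by
    have : ∀ᶠ s in 𝓝 t, |s - t₀| < N :=
      (by fun_prop : Continuous fun s => |s - t₀|).continuousAt.eventually (gt_mem_nhds hN)
    filter_upwards [this] with s hs
    have hceil := abs_le.1 (Nat.le_ceil |s - t₀|)
    exact hagree _ N (Nat.ceil_le.2 hs.le) s
      ⟨by linarith [hceil.1], by linarith [hceil.2]⟩
  have ht : t ∈ Ioo (t₀ - (N + 1)) (t₀ + (N + 1)) := by
    have := abs_lt.1 hN
    exact ⟨by linarith [this.1], by linarith [this.2]⟩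
  have hderiv := (hY N t ht).congr_of_eventuallyEq hnear
  rwa [← hnear.self_of_nhds] at hderiv

theorem exists_hasDerivAt_comp_retraction {S : Set E} {π : E → E} (hπ : LipschitzWith 1 π)
    (hπS : ∀ x, π x ∈ S) (hlip : ∀ t ≥ a, LipschitzOnWith K (f t) S)
    (hcont : ∀ x ∈ S, ContinuousOn (fun t => f t x) (Ici a))
    (hbdd : ∀ t ≥ a, ∀ x ∈ S, ‖f t x‖ ≤ L) (x₀ : E) :
    ∃ X : ℝ → E, X a = x₀ ∧ ∀ t ≥ a, HasDerivAt X (f t (π (X t))) t := by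
  obtain ⟨X, hX₀, hX⟩ := exists_forall_hasDerivAt_of_lipschitz_of_bounded
    (f := fun t x => f (max t a) (π x)) (K := K) (L := L)
    (fun t => by
      have := (hlip _ (le_max_right t a)).comp (hπ.lipschitzOnWith (s := univ))
        fun x _ => hπS x
      rwa [mul_one, lipschitzOnWith_univ] at this)
    (fun x => (hcont _ (hπS x)).comp_continuous (by fun_prop) fun t => le_max_right t a)
    (fun t x => hbdd _ (le_max_right t a) _ (hπS x)) a x₀
  exact ⟨X, hX₀, fun t ht => by simpa only [max_eq_left ht] using hX t⟩

theorem le_of_deriv_neg_of_eq {v v' : ℝ → ℝ} {M : ℝ}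
    (hv : ∀ u ≥ a, HasDerivAt v (v' u) u) (ha : v a ≤ M)
    (hM : ∀ u ≥ a, v u = M → v' u < 0) {u : ℝ} (hu : a ≤ u) : v u ≤ M :=
  image_le_of_deriv_right_lt_deriv_boundary (a := a) (b := u) (B := fun _ => M) (B' := fun _ => 0)
    (fun x hx => (hv x hx.1).continuousAt.continuousWithinAt)
    (fun x hx => (hv x hx.1).hasDerivWithinAt) ha (fun x => hasDerivAt_const x M)
    (fun x hx => hM x hx.1) (right_mem_Icc.2 hu)

theorem mem_Icc_of_deriv_inward {v v' : ℝ → ℝ} {y₁ y₂ : ℝ}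
    (hv : ∀ u ≥ a, HasDerivAt v (v' u) u) (ha : v a ∈ Icc y₁ y₂)
    (hbot : ∀ u ≥ a, v u ≤ y₁ → 0 < v' u) (htop : ∀ u ≥ a, y₂ ≤ v u → v' u < 0)
    {u : ℝ} (hu : a ≤ u) : v u ∈ Icc y₁ y₂ := by
  refine ⟨neg_le_neg_iff.1 ?_, le_of_deriv_neg_of_eq hv ha.2 (fun u hu h => htop u hu h.ge) hu⟩
  exact le_of_deriv_neg_of_eq (v := fun u => -v u) (fun u hu => (hv u hu).neg)
    (neg_le_neg ha.1) (fun u hu h => neg_neg_of_pos (hbot u hu (neg_injective h).le)) hu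

end ODE

section ExponentialDecay

/-- The exponential `u ↦ e^{-pu}`. It is the scale in which all quantities of the reduced
modulation system are measured; `p` may be negative. -/
noncomputable def expDecay (p u : ℝ) : ℝ := Real.exp (-p * u)

variable {p q : ℝ}

theorem expDecay_pos (p u : ℝ) : 0 < expDecay p u := Real.exp_pos _

theorem expDecay_mul (p q u : ℝ) : expDecay p u * expDecay q u = expDecay (p + q) u := by
  simp only [expDecay, ← Real.exp_add]
  ring_nf

theorem expDecay_inv (p u : ℝ) : (expDecay p u)⁻¹ = expDecay (-p) u := by
  simp only [expDecay, ← Real.exp_neg]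
  ring_nf

theorem expDecay_rpow (p s u : ℝ) : expDecay p u ^ s = expDecay (p * s) u := by
  simp only [expDecay, ← Real.exp_mul]
  ring_nf

theorem expDecay_sq (p u : ℝ) : expDecay p u ^ 2 = expDecay (2 * p) u := by
  rw [sq, expDecay_mul, two_mul]

theorem expDecay_sub (p u s : ℝ) : expDecay p (u - s) = expDecay p (-s) * expDecay p u := by
  simp only [expDecay, ← Real.exp_add]
  ring_nf

theorem hasDerivAt_expDecay (p u : ℝ) : HasDerivAt (expDecay p) (-p * expDecay p u) u := by
  have h : HasDerivAt (fun x => -p * x) (-p) u := by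
    simpa using (hasDerivAt_id u).const_mul (-p)
  exact h.exp.congr_deriv (mul_comm _ _)

theorem continuous_expDecay (p : ℝ) : Continuous (expDecay p) :=
  continuous_iff_continuousAt.2 fun u => (hasDerivAt_expDecay p u).continuousAt

theorem tendsto_expDecay (hp : 0 < p) : Tendsto (expDecay p) atTop (𝓝 0) :=
  Real.tendsto_exp_atBot.comp (tendsto_id.const_mul_atTop_of_neg (neg_neg_of_pos hp))

theorem expDecay_antitone (hp : 0 ≤ p) : Antitone (expDecay p) := fun u w huw =>
  Real.exp_le_exp.2 (by nlinarith)

theorem norm_sub_le_of_norm_deriv_le_expDecay {E : Type*} [NormedAddCommGroup E] [NormedSpace ℝ E]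
    {f f' : ℝ → E} {a C : ℝ} (hp : 0 < p) (hf : ∀ u ≥ a, HasDerivAt f (f' u) u)
    (hbound : ∀ u ≥ a, ‖f' u‖ ≤ C * expDecay p u) {u w : ℝ} (hu : a ≤ u) (huw : u ≤ w) :
    ‖f w - f u‖ ≤ C / p * expDecay p u := by
  have hC : 0 ≤ C :=
    nonneg_of_mul_nonneg_left ((norm_nonneg _).trans (hbound a le_rfl)) (expDecay_pos p a)
  have hboundary : ∀ x, HasDerivAt (fun x => C / p * (expDecay p u - expDecay p x))
      (C * expDecay p x) x := fun x =>
    (((hasDerivAt_expDecay p x).const_sub _).const_mul (C / p)).congr_deriv (by field_simp)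
  calc ‖f w - f u‖ ≤ C / p * (expDecay p u - expDecay p w) :=
        image_norm_le_of_norm_deriv_right_le_deriv_boundary (f := fun x => f x - f u) (f' := f')
          (fun x hx => ((hf x (hu.trans hx.1)).sub_const _).continuousAt.continuousWithinAt)
          (fun x hx => ((hf x (hu.trans hx.1)).sub_const _).hasDerivWithinAt)
          (by simp) hboundary (fun x hx => hbound x (hu.trans hx.1)) (right_mem_Icc.2 huw)
    _ ≤ C / p * expDecay p u := by
        gcongr
        exact sub_le_self _ (expDecay_pos p w).le

theorem exists_isBigO_sub_of_deriv_isBigO_expDecay {E : Type*} [NormedAddCommGroup E]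
    [NormedSpace ℝ E] [CompleteSpace E] {f f' : ℝ → E} (hp : 0 < p)
    (hf : ∀ᶠ u in atTop, HasDerivAt f (f' u) u) (hbound : f' =O[atTop] expDecay p) :
    ∃ l : E, (fun u => f u - l) =O[atTop] expDecay p := by
  obtain ⟨C, hC⟩ := hbound.bound
  obtain ⟨a, ha⟩ := eventually_atTop.1 (hf.and hC)
  have hincr : ∀ u w, a ≤ u → u ≤ w → ‖f w - f u‖ ≤ C / p * expDecay p u := fun u w hu huw =>
    norm_sub_le_of_norm_deriv_le_expDecay hp (fun u hu => (ha u hu).1)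
      (fun u hu => by simpa [abs_of_pos (expDecay_pos p u)] using (ha u hu).2) hu huw
  have hlim : Tendsto (fun u => C / p * expDecay p u) atTop (𝓝 0) := by
    simpa using (tendsto_expDecay hp).const_mul (C / p)
  have hcauchy : CauchySeq f := by
    refine Metric.cauchySeq_iff'.2 fun ε hε => ?_
    obtain ⟨N, hN, haN⟩ :=
      ((hlim.eventually (gt_mem_nhds hε)).and (eventually_ge_atTop a)).exists
    exact ⟨N, fun n hn => (dist_eq_norm _ _).trans_lt ((hincr N n haN hn).trans_lt hN)⟩
  obtain ⟨l, hl⟩ := cauchySeq_tendsto_of_complete hcauchy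
  refine ⟨l, IsBigO.of_bound (C / p) ((eventually_ge_atTop a).mono fun u hu => ?_)⟩
  rw [norm_sub_rev, Real.norm_of_nonneg (expDecay_pos p u).le]
  exact le_of_tendsto (hl.sub_const (f u)).norm
    ((eventually_ge_atTop u).mono fun w hw => hincr u w hu hw)

end ExponentialDecay

section RelBigO

/-- `RelBigO l w f F` states that `f = F * (1 + O(w))` along the filter `l`. The relative error is
carried by a factor rather than by `f / F`, so that `F` is allowed to vanish. -/
def RelBigO {ι : Type*} (l : Filter ι) (w f F : ι → ℝ) : Prop :=
  ∃ φ : ι → ℝ, (fun i => φ i - 1) =O[l] w ∧ f =ᶠ[l] fun i => F i * φ i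

variable {ι κ : Type*} {l : Filter ι} {w w' f g F G : ι → ℝ}

theorem tendsto_one_of_isBigO_sub_one {φ : ι → ℝ} (hφ : (fun i => φ i - 1) =O[l] w)
    (hw : Tendsto w l (𝓝 0)) : Tendsto φ l (𝓝 1) := by
  simpa using (hφ.trans_tendsto hw).add_const 1

theorem isBigO_mul_sub_one {φ ψ : ι → ℝ} (hφ : (fun i => φ i - 1) =O[l] w)
    (hψ : (fun i => ψ i - 1) =O[l] w) (hw : Tendsto w l (𝓝 0)) :
    (fun i => φ i * ψ i - 1) =O[l] w := by
  have hψ1 : ψ =O[l] fun _ => (1 : ℝ) := (tendsto_one_of_isBigO_sub_one hψ hw).isBigO_one ℝ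
  have hprod : (fun i => (φ i - 1) * ψ i) =O[l] w := by simpa using hφ.mul hψ1
  exact (hprod.add hψ).congr_left fun i => by ring

theorem isBigO_comp_sub_one {φ : ι → ℝ} {ψ : ℝ → ℝ} (hψ : DifferentiableAt ℝ ψ 1)
    (hψ1 : ψ 1 = 1) (hφ : (fun i => φ i - 1) =O[l] w) (hw : Tendsto w l (𝓝 0)) :
    (fun i => ψ (φ i) - 1) =O[l] w := by
  have := (hψ.isBigO_sub.comp_tendsto (tendsto_one_of_isBigO_sub_one hφ hw)).trans hφ
  simpa only [Function.comp_def, hψ1] using this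

namespace RelBigO

theorem refl (l : Filter ι) (w f : ι → ℝ) : RelBigO l w f f :=
  ⟨fun _ => 1, by simpa using isBigO_zero w l, by simp⟩

theorem mono (h : RelBigO l w f F) (hw : w =O[l] w') : RelBigO l w' f F :=
  let ⟨φ, hφ, hf⟩ := h
  ⟨φ, hφ.trans hw, hf⟩

theorem congr_left (h : RelBigO l w f F) (hfg : g =ᶠ[l] f) : RelBigO l w g F :=
  let ⟨φ, hφ, hf⟩ := h
  ⟨φ, hφ, hfg.trans hf⟩

theorem comp_tendsto (h : RelBigO l w f F) {l' : Filter κ} {u : κ → ι} (hu : Tendsto u l' l) :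
    RelBigO l' (w ∘ u) (f ∘ u) (F ∘ u) :=
  let ⟨φ, hφ, hf⟩ := h
  ⟨φ ∘ u, hφ.comp_tendsto hu, hu.eventually hf⟩

theorem mul (hf : RelBigO l w f F) (hg : RelBigO l w g G) (hw : Tendsto w l (𝓝 0)) :
    RelBigO l w (fun i => f i * g i) fun i => F i * G i := by
  obtain ⟨φ, hφ, hfφ⟩ := hf
  obtain ⟨ψ, hψ, hgψ⟩ := hg
  refine ⟨fun i => φ i * ψ i, isBigO_mul_sub_one hφ hψ hw, ?_⟩
  filter_upwards [hfφ, hgψ] with i hi hi'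
  rw [hi, hi']
  ring

theorem inv (hf : RelBigO l w f F) (hw : Tendsto w l (𝓝 0)) :
    RelBigO l w (fun i => (f i)⁻¹) fun i => (F i)⁻¹ := by
  obtain ⟨φ, hφ, hfφ⟩ := hf
  refine ⟨fun i => (φ i)⁻¹,
    isBigO_comp_sub_one (differentiableAt_inv one_ne_zero) inv_one hφ hw, ?_⟩
  filter_upwards [hfφ] with i hi
  rw [hi, mul_inv]

theorem rpow (hf : RelBigO l w f F) (hF : ∀ i, 0 ≤ F i) (hw : Tendsto w l (𝓝 0)) (s : ℝ) :
    RelBigO l w (fun i => f i ^ s) fun i => F i ^ s := by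
  obtain ⟨φ, hφ, hfφ⟩ := hf
  refine ⟨fun i => φ i ^ s, isBigO_comp_sub_one
    (Real.hasDerivAt_rpow_const (Or.inl one_ne_zero)).differentiableAt (Real.one_rpow s) hφ hw, ?_⟩
  filter_upwards [hfφ,
    (tendsto_one_of_isBigO_sub_one hφ hw).eventually (lt_mem_nhds zero_lt_one)] with i hi hpos
  rw [hi, Real.mul_rpow (hF i) hpos.le]

theorem symm (hf : RelBigO l w f F) (hw : Tendsto w l (𝓝 0)) : RelBigO l w F f := by
  obtain ⟨φ, hφ, hfφ⟩ := hf
  refine ⟨fun i => (φ i)⁻¹,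
    isBigO_comp_sub_one (differentiableAt_inv one_ne_zero) inv_one hφ hw, ?_⟩
  filter_upwards [hfφ,
    (tendsto_one_of_isBigO_sub_one hφ hw).eventually (lt_mem_nhds zero_lt_one)] with i hi hpos
  rw [hi, mul_inv_cancel_right₀ hpos.ne']

theorem trans (hfg : RelBigO l w f g) (hgF : RelBigO l w g F) (hw : Tendsto w l (𝓝 0)) :
    RelBigO l w f F := by
  obtain ⟨φ, hφ, hfφ⟩ := hfg
  obtain ⟨ψ, hψ, hgψ⟩ := hgF
  refine ⟨fun i => ψ i * φ i, isBigO_mul_sub_one hψ hφ hw, ?_⟩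
  filter_upwards [hfφ, hgψ] with i hi hi'
  rw [hi, hi', mul_assoc]

theorem of_isBigO_sub (h : (fun i => f i - F i) =O[l] fun i => F i * w i) (hF : ∀ i, F i ≠ 0) :
    RelBigO l w f F := by
  refine ⟨fun i => f i / F i, ?_, .of_forall fun i => (mul_div_cancel₀ _ (hF i)).symm⟩
  refine ((isBigO_refl (fun i => (F i)⁻¹) l).mul h).congr (fun i => ?_) fun i => ?_
  · field_simp [hF i]
  · exact inv_mul_cancel_left₀ (hF i) _

theorem isBigO_sub (h : RelBigO l w f F) : (fun i => f i - F i) =O[l] fun i => F i * w i := by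
  obtain ⟨φ, hφ, hfφ⟩ := h
  refine ((isBigO_refl F l).mul hφ).congr' ?_ .rfl
  filter_upwards [hfφ] with i hi
  rw [hi]
  ring

theorem isBigO (h : RelBigO l w f F) (hw : Tendsto w l (𝓝 0)) : f =O[l] F := by
  obtain ⟨φ, hφ, hfφ⟩ := h
  have := (isBigO_refl F l).mul ((tendsto_one_of_isBigO_sub_one hφ hw).isBigO_one ℝ)
  exact this.congr' hfφ.symm (.of_forall fun i => mul_one _)

theorem eventually_pos (h : RelBigO l w f F) (hF : ∀ i, 0 < F i) (hw : Tendsto w l (𝓝 0)) :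
    ∀ᶠ i in l, 0 < f i := by
  obtain ⟨φ, hφ, hfφ⟩ := h
  filter_upwards [hfφ,
    (tendsto_one_of_isBigO_sub_one hφ hw).eventually (lt_mem_nhds zero_lt_one)] with i hi hpos
  rw [hi]
  exact mul_pos (hF i) hpos

end RelBigO

theorem exists_eventually_hasDerivAt_of_eventually_continuousAt {g : ℝ → ℝ}
    (hg : ∀ᶠ u in atTop, ContinuousAt g u) :
    ∃ F : ℝ → ℝ, ∀ᶠ u in atTop, HasDerivAt F (g u) u := by
  obtain ⟨a, ha⟩ := eventually_atTop.1 hg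
  have hc : Continuous fun u => g (max u a) :=
    ContinuousOn.comp_continuous (fun u hu => (ha u hu).continuousWithinAt : ContinuousOn g (Ici a))
      (by fun_prop) fun u => le_max_right u a
  refine ⟨fun u => ∫ s in a..u, g (max s a), (eventually_ge_atTop a).mono fun u hu => ?_⟩
  have := intervalIntegral.integral_hasDerivAt_right (hc.intervalIntegrable a u)
    hc.aestronglyMeasurable.stronglyMeasurableAtFilter hc.continuousAt
  rwa [max_eq_left hu] at this

theorem exists_isBigO_sub_of_deriv_relBigO_expDecay {p q A : ℝ} {f f' : ℝ → ℝ} (hp : p ≠ 0)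
    (hpq : 0 < p + q) (hf : ∀ᶠ u in atTop, HasDerivAt f (f' u) u)
    (hf' : RelBigO atTop (expDecay q) f' fun u => A * expDecay p u) :
    ∃ c : ℝ, (fun u => f u - (c - A / p * expDecay p u)) =O[atTop] expDecay (p + q) := by
  obtain ⟨c, hc⟩ := exists_isBigO_sub_of_deriv_isBigO_expDecay
    (f := fun u => f u + A / p * expDecay p u) (f' := fun u => f' u - A * expDecay p u) hpq
    (hf.mono fun u hu => (hu.add ((hasDerivAt_expDecay p u).const_mul (A / p))).congr_deriv
      (by field_simp; ring))
    (hf'.isBigO_sub.trans ((isBigO_const_mul_self A (expDecay (p + q)) atTop).congr_left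
      fun u => by rw [← expDecay_mul, mul_assoc]))
  exact ⟨c, hc.congr_left fun u => by ring⟩

end RelBigO

section InverseFunction

variable {T h : ℝ → ℝ} {a c : ℝ}

theorem bijOn_Ioi_Ioo_of_strictMonoOn_of_tendsto (hcont : ContinuousOn T (Ici a))
    (hmono : StrictMonoOn T (Ici a)) (hlim : Tendsto T atTop (𝓝 c)) :
    BijOn T (Ioi a) (Ioo (T a) c) := by
  refine ⟨fun u hu => ⟨hmono self_mem_Ici (Ioi_subset_Ici_self hu) hu, ?_⟩,
    hmono.injOn.mono Ioi_subset_Ici_self, fun t ht => ?_⟩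
  · have hu1 : u + 1 ∈ Ici a := (lt_add_of_lt_of_pos (mem_Ioi.1 hu) one_pos).le
    refine (hmono (Ioi_subset_Ici_self hu) hu1 (lt_add_one u)).trans_le (ge_of_tendsto hlim ?_)
    filter_upwards [eventually_ge_atTop (u + 1)] with w hw
    exact hmono.monotoneOn hu1 (hu1.trans hw) hw
  · obtain ⟨w, hw, haw⟩ :=
      ((hlim.eventually (lt_mem_nhds ht.2)).and (eventually_ge_atTop a)).exists
    obtain ⟨u, hu, hut⟩ :=
      intermediate_value_Ioo haw (hcont.mono Icc_subset_Ici_self) ⟨ht.1, hw⟩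
    exact ⟨u, hu.1, hut⟩

theorem exists_continuousAt_inverse_of_strictMonoOn_of_tendsto (hcont : ContinuousOn T (Ici a))
    (hmono : StrictMonoOn T (Ici a)) (hlim : Tendsto T atTop (𝓝 c)) :
    ∃ U : ℝ → ℝ, ∀ t ∈ Ioo (T a) c, a < U t ∧ T (U t) = t ∧ ContinuousAt U t := by
  have hbij := bijOn_Ioi_Ioo_of_strictMonoOn_of_tendsto hcont hmono hlim
  set U := Function.invFunOn T (Ioi a)
  have hinv : InvOn U T (Ioi a) (Ioo (T a) c) := hbij.invOn_invFunOn
  have hU : BijOn U (Ioo (T a) c) (Ioi a) := hinv.symm.bijOn hbij.surjOn.mapsTo_invFunOn hbij.mapsTo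
  have hUmono : MonotoneOn U (Ioo (T a) c) := fun s hs t ht hst => by
    rwa [← hmono.le_iff_le (Ioi_subset_Ici_self (hU.mapsTo hs))
      (Ioi_subset_Ici_self (hU.mapsTo ht)), hinv.2 hs, hinv.2 ht]
  exact ⟨U, fun t ht => ⟨hU.mapsTo ht, hinv.2 ht,
    continuousAt_of_monotoneOn_of_image_mem_nhds hUmono (Ioo_mem_nhds ht.1 ht.2)
      (hU.image_eq ▸ Ioi_mem_nhds (hU.mapsTo ht))⟩⟩

theorem exists_inverse_of_deriv_pos_of_tendsto (hT : ∀ᶠ u in atTop, HasDerivAt T (h u) u)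
    (hpos : ∀ᶠ u in atTop, 0 < h u) (hlim : Tendsto T atTop (𝓝 c)) :
    ∃ U : ℝ → ℝ, Tendsto U (𝓝[<] c) atTop ∧
      ∀ᶠ t in 𝓝[<] c, T (U t) = t ∧ HasDerivAt U (h (U t))⁻¹ t := by
  obtain ⟨a, ha⟩ := eventually_atTop.1 (hT.and hpos)
  have hcont : ContinuousOn T (Ici a) := fun u hu => (ha u hu).1.continuousAt.continuousWithinAt
  have hmono : StrictMonoOn T (Ici a) := strictMonoOn_of_deriv_pos (convex_Ici a) hcont
    fun u hu => (ha u (interior_subset hu)).1.deriv.symm ▸ (ha u (interior_subset hu)).2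
  have hmem : ∀ b ≥ a, Ioo (T b) c ∈ 𝓝[<] c := fun b hb => Ioo_mem_nhdsLT <|
    ((bijOn_Ioi_Ioo_of_strictMonoOn_of_tendsto (hcont.mono (Ici_subset_Ici.2 hb))
      (hmono.mono (Ici_subset_Ici.2 hb)) hlim).mapsTo (mem_Ioi.2 (lt_add_one b))).elim lt_trans
  obtain ⟨U, hU⟩ := exists_continuousAt_inverse_of_strictMonoOn_of_tendsto hcont hmono hlim
  refine ⟨U, tendsto_atTop.2 fun b => ?_, ?_⟩
  · filter_upwards [hmem _ (le_max_right b a), hmem a le_rfl] with t hbt hat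
    have hlt : T (max b a) < T (U t) := (hU t hat).2.1.symm ▸ hbt.1
    exact (le_max_left b a).trans
      ((hmono.lt_iff_lt (le_max_right b a) (hU t hat).1.le).1 hlt).le
  · filter_upwards [hmem a le_rfl] with t ht
    obtain ⟨hat, -, hcontU⟩ := hU t ht
    exact ⟨(hU t ht).2.1, (ha _ hat.le).1.of_local_left_inverse hcontU (ha _ hat.le).2.ne'
      (mem_of_superset (Ioo_mem_nhds ht.1 ht.2) fun s hs => (hU s hs).2.1)⟩

end InverseFunction

section Trapping

theorem exists_solution_forall_mem_rectangle {f : ℝ → ℝ × ℝ → ℝ × ℝ} {K L : ℝ≥0}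
    {a p C B₀ x₁ x₂ y₁ y₂ : ℝ} (hp : 0 < p) (hy : y₁ ≤ y₂)
    (hlip : ∀ t ≥ a, LipschitzOnWith K (f t) (Icc x₁ x₂ ×ˢ Icc y₁ y₂))
    (hcont : ∀ x ∈ Icc x₁ x₂ ×ˢ Icc y₁ y₂, ContinuousOn (fun t => f t x) (Ici a))
    (hbdd : ∀ t ≥ a, ∀ x ∈ Icc x₁ x₂ ×ˢ Icc y₁ y₂, ‖f t x‖ ≤ L)
    (hfst : ∀ t ≥ a, ∀ x ∈ Icc x₁ x₂ ×ˢ Icc y₁ y₂, |(f t x).1| ≤ C * expDecay p t)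
    (hB₀ : B₀ ∈ Icc x₁ x₂) (hx₁ : x₁ + C / p * expDecay p a ≤ B₀)
    (hx₂ : B₀ + C / p * expDecay p a ≤ x₂)
    (hbot : ∀ t ≥ a, ∀ B ∈ Icc x₁ x₂, 0 < (f t (B, y₁)).2)
    (htop : ∀ t ≥ a, ∀ B ∈ Icc x₁ x₂, (f t (B, y₂)).2 < 0) :
    ∃ X : ℝ → ℝ × ℝ, ∀ t ≥ a,
      X t ∈ Icc x₁ x₂ ×ˢ Icc y₁ y₂ ∧ HasDerivAt X (f t (X t)) t := by
  have hx : x₁ ≤ x₂ := hB₀.1.trans hB₀.2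
  set π : ℝ × ℝ → ℝ × ℝ := fun x => (projIcc _ _ hx x.1, projIcc _ _ hy x.2)
  have hπ : LipschitzWith 1 π := by
    have hproj {c d : ℝ} (h : c ≤ d) : LipschitzWith 1 fun s => (projIcc c d h s : ℝ) := by
      simpa [Function.comp_def] using
        (LipschitzWith.subtype_val (Icc c d)).comp (LipschitzWith.projIcc h)
    simpa using ((hproj hx).comp LipschitzWith.prod_fst).prodMk
      ((hproj hy).comp LipschitzWith.prod_snd)
  have hπmem : ∀ x, π x ∈ Icc x₁ x₂ ×ˢ Icc y₁ y₂ := fun x =>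
    ⟨(projIcc _ _ hx x.1).2, (projIcc _ _ hy x.2).2⟩
  obtain ⟨X, hXa, hX⟩ := exists_hasDerivAt_comp_retraction hπ hπmem hlip hcont hbdd (B₀, y₁)
  have hX₁ : ∀ t ≥ a, (X t).1 ∈ Icc x₁ x₂ := fun t ht => by
    have := norm_sub_le_of_norm_deriv_le_expDecay hp (fun s hs => (hX s hs).fst)
      (fun s hs => hfst s hs _ (hπmem _)) le_rfl ht
    rw [hXa, Real.norm_eq_abs, abs_sub_comm, mem_Icc_iff_abs_le] at this
    exact ⟨by linarith [this.1], by linarith [this.2]⟩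
  have hX₂ : ∀ t ≥ a, (X t).2 ∈ Icc y₁ y₂ := fun t ht => by
    refine mem_Icc_of_deriv_inward (fun s hs => (hX s hs).snd) (by simp [hXa, hy])
      (fun s hs h => ?_) (fun s hs h => ?_) ht
    · simpa [π, projIcc_of_le_left _ h] using hbot s hs _ (hπmem (X s)).1
    · simpa [π, projIcc_of_right_le _ h] using htop s hs _ (hπmem (X s)).1
  refine ⟨X, fun t ht => ⟨⟨hX₁ t ht, hX₂ t ht⟩, ?_⟩⟩
  have hfix : π (X t) = X t :=
    Prod.ext (by simp [π, projIcc_of_mem _ (hX₁ t ht)]) (by simp [π, projIcc_of_mem _ (hX₂ t ht)])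
  simpa only [hfix] using hX t ht

end Trapping

section ReducedSystem

/-- `P b β̃` vanishes to third order at the origin, in the form that survives the rescaling
`b = x B`, `β̃ = x z`: the quotient by `x ^ 3` extends to a `C¹` function of `(x, B, z)`. -/
def VanishesToThirdOrder (P : ℝ → ℝ → ℝ) : Prop :=
  ∃ Q : ℝ × ℝ × ℝ → ℝ, ContDiff ℝ 1 Q ∧ ∀ x B z, P (x * B) (x * z) = x ^ 3 * Q (x, B, z)

/-- The coefficient `D` in the equation `B' = x² D` satisfied by `B = b / x`, where
`x = e^{-(1-α)u}` and `v = β̃ / x²`, at the point `(x, B, v)`. -/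
noncomputable def scaledDrift (βinf : ℝ) (Q₁ Q₂ : ℝ × ℝ × ℝ → ℝ) (p : ℝ × ℝ × ℝ) : ℝ :=
  Q₁ (p.1, p.2.1, p.1 * p.2.2) +
    (-2 * p.2.1 * p.2.2 + Q₂ (p.1, p.2.1, p.1 * p.2.2)) / (βinf + p.1 * (p.1 * p.2.2))

/-- The right-hand side `(B', v')` of the reduced modulation equations in the unknowns `B = b / x`,
`v = β̃ / x²` with `x = e^{-(1-α)u}`, at the point `(x, B, v)`. It is regular at `x = 0`, that is,
at the blow-up time. -/
noncomputable def scaledField (α βinf : ℝ) (Q₁ Q₂ : ℝ × ℝ × ℝ → ℝ) (p : ℝ × ℝ × ℝ) : ℝ × ℝ :=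
  (p.1 ^ 2 * scaledDrift βinf Q₁ Q₂ p,
    -2 * α * p.2.2 + Q₂ (p.1, p.2.1, p.1 * p.2.2) / p.2.1)

variable {α βinf : ℝ} {Q₁ Q₂ : ℝ × ℝ × ℝ → ℝ}

theorem contDiffAt_scaledDrift (hQ₁ : ContDiff ℝ 1 Q₁) (hQ₂ : ContDiff ℝ 1 Q₂)
    {p : ℝ × ℝ × ℝ} (hp : βinf + p.1 * (p.1 * p.2.2) ≠ 0) :
    ContDiffAt ℝ 1 (scaledDrift βinf Q₁ Q₂) p := by
  have hs : ContDiff ℝ 1 fun p : ℝ × ℝ × ℝ => (p.1, p.2.1, p.1 * p.2.2) := by fun_prop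
  exact (hQ₁.comp hs).contDiffAt.add
    (ContDiffAt.div (ContDiff.add (by fun_prop) (hQ₂.comp hs)).contDiffAt (by fun_prop) hp)

theorem contDiffAt_scaledField (hQ₁ : ContDiff ℝ 1 Q₁) (hQ₂ : ContDiff ℝ 1 Q₂)
    {p : ℝ × ℝ × ℝ} (hp : βinf + p.1 * (p.1 * p.2.2) ≠ 0) (hB : p.2.1 ≠ 0) :
    ContDiffAt ℝ 1 (scaledField α βinf Q₁ Q₂) p := by
  have hs : ContDiff ℝ 1 fun p : ℝ × ℝ × ℝ => (p.1, p.2.1, p.1 * p.2.2) := by fun_prop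
  exact (ContDiffAt.mul (by fun_prop) (contDiffAt_scaledDrift hQ₁ hQ₂ hp)).prodMk
    (ContDiffAt.add (by fun_prop) ((hQ₂.comp hs).contDiffAt.div (by fun_prop) hB))

theorem eventually_forall_mem_Icc_denominator_pos (hβ : 0 < βinf) (M : ℝ) :
    ∀ᶠ x in 𝓝 (0 : ℝ), ∀ v ∈ Icc (-M) M, 0 < βinf + x * (x * v) := by
  refine isCompact_Icc.eventually_forall_of_forall_eventually fun v _ => ?_
  exact (by fun_prop : Continuous fun q : ℝ × ℝ => βinf + q.1 * (q.1 * q.2)).continuousAt.eventually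
    (lt_mem_nhds (by simpa using hβ))

-- At `x = 0` the field is `(0, -2αv + Q₂(0, B, 0) / B)`, which points strictly inwards at `v = ±M`
-- for large `M`; compactness propagates the strict inequalities to small `x`.
theorem exists_eventually_scaledField_inward (hα : 0 < α) (hβ : 0 < βinf)
    (hQ₁ : ContDiff ℝ 1 Q₁) (hQ₂ : ContDiff ℝ 1 Q₂) :
    ∃ M > 0, ∀ᶠ x in 𝓝 (0 : ℝ), ∀ B ∈ Icc (1 / 2 : ℝ) (3 / 2),
      0 < (scaledField α βinf Q₁ Q₂ (x, B, -M)).2 ∧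
        (scaledField α βinf Q₁ Q₂ (x, B, M)).2 < 0 := by
  have hB0 : ∀ B ∈ Icc (1 / 2 : ℝ) (3 / 2), B ≠ 0 := fun B hB => (one_half_pos.trans_le hB.1).ne'
  obtain ⟨C₀, hC₀⟩ := isCompact_Icc.exists_bound_of_continuousOn
    (f := fun B : ℝ => Q₂ (0, B, 0) / B) (s := Icc (1 / 2) (3 / 2))
    ((hQ₂.continuous.comp (by fun_prop)).continuousOn.div continuousOn_id hB0)
  have hC₀0 : 0 ≤ C₀ := (norm_nonneg _).trans (hC₀ 1 (by norm_num))
  set M := (C₀ + 1) / (2 * α) with hM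
  have hMα : 2 * α * M = C₀ + 1 := by rw [hM]; field_simp
  have hcont : ∀ B ∈ Icc (1 / 2 : ℝ) (3 / 2), ∀ v : ℝ, ContinuousAt
      (fun q : ℝ × ℝ => (scaledField α βinf Q₁ Q₂ (q.1, q.2, v)).2) (0, B) := fun B hB v => by
    have h := (contDiffAt_scaledField (α := α) (p := (0, B, v)) hQ₁ hQ₂
      (by simpa using hβ.ne') (hB0 B hB)).continuousAt
    exact (ContinuousAt.comp (f := fun q : ℝ × ℝ => (q.1, q.2, v)) (x := (0, B)) h
      (by fun_prop)).snd
  refine ⟨M, by positivity, isCompact_Icc.eventually_forall_of_forall_eventually fun B hB => ?_⟩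
  have hbound := abs_le.1 (hC₀ B hB)
  refine ((hcont B hB (-M)).eventually (lt_mem_nhds ?_)).and
    ((hcont B hB M).eventually (gt_mem_nhds ?_))
  · simp only [scaledField, zero_mul]
    linarith
  · simp only [scaledField, zero_mul]
    linarith

/-- The box `0 ≤ x ≤ ε`, `1/2 ≤ B ≤ 3/2`, `|v| ≤ M` in which solutions of the scaled equations are
trapped. -/
def scaledBox (ε M : ℝ) : Set (ℝ × ℝ × ℝ) := Icc 0 ε ×ˢ Icc (1 / 2) (3 / 2) ×ˢ Icc (-M) M

theorem isCompact_scaledBox (ε M : ℝ) : IsCompact (scaledBox ε M) :=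
  isCompact_Icc.prod (isCompact_Icc.prod isCompact_Icc)

theorem convex_scaledBox (ε M : ℝ) : Convex ℝ (scaledBox ε M) :=
  (convex_Icc _ _).prod ((convex_Icc _ _).prod (convex_Icc _ _))

theorem exists_bounds_scaledField (hQ₁ : ContDiff ℝ 1 Q₁) (hQ₂ : ContDiff ℝ 1 Q₂) {ε M : ℝ}
    (hden : ∀ p ∈ scaledBox ε M, βinf + p.1 * (p.1 * p.2.2) ≠ 0) :
    ∃ (K L : ℝ≥0) (C : ℝ), LipschitzOnWith K (scaledField α βinf Q₁ Q₂) (scaledBox ε M) ∧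
      ∀ p ∈ scaledBox ε M, ‖scaledField α βinf Q₁ Q₂ p‖ ≤ L ∧
        |(scaledField α βinf Q₁ Q₂ p).1| ≤ C * p.1 ^ 2 := by
  have hcompact := isCompact_scaledBox ε M
  have hfield : ContDiffOn ℝ 1 (scaledField α βinf Q₁ Q₂) (scaledBox ε M) := fun p hp =>
    (contDiffAt_scaledField hQ₁ hQ₂ (hden p hp)
      (one_half_pos.trans_le hp.2.1.1).ne').contDiffWithinAt
  have hdrift : ContinuousOn (scaledDrift βinf Q₁ Q₂) (scaledBox ε M) := fun p hp =>
    (contDiffAt_scaledDrift hQ₁ hQ₂ (hden p hp)).continuousAt.continuousWithinAt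
  obtain ⟨K, hK⟩ := hfield.exists_lipschitzOnWith one_ne_zero (convex_scaledBox ε M) hcompact
  obtain ⟨L, hL⟩ := hcompact.exists_bound_of_continuousOn hfield.continuousOn
  obtain ⟨C, hC⟩ := hcompact.exists_bound_of_continuousOn hdrift
  refine ⟨K, L.toNNReal, C, hK, fun p hp => ⟨(hL p hp).trans (Real.le_coe_toNNReal L), ?_⟩⟩
  rw [scaledField, abs_mul, abs_sq, mul_comm]
  exact mul_le_mul_of_nonneg_right (hC p hp) (sq_nonneg _)

theorem exists_pos_forall_mem_Icc_scaledField_inward (hα : 0 < α) (hβ : 0 < βinf)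
    (hQ₁ : ContDiff ℝ 1 Q₁) (hQ₂ : ContDiff ℝ 1 Q₂) :
    ∃ ε > 0, ∃ M > 0, ∀ x ∈ Icc 0 ε, (∀ v ∈ Icc (-M) M, 0 < βinf + x * (x * v)) ∧
      ∀ B ∈ Icc (1 / 2 : ℝ) (3 / 2), 0 < (scaledField α βinf Q₁ Q₂ (x, B, -M)).2 ∧
        (scaledField α βinf Q₁ Q₂ (x, B, M)).2 < 0 := by
  obtain ⟨M, hM, hinward⟩ := exists_eventually_scaledField_inward hα hβ hQ₁ hQ₂
  obtain ⟨ε, hε, hsmall⟩ := mem_nhdsGE_iff_exists_Icc_subset.1 (mem_nhdsWithin_of_mem_nhds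
    ((eventually_forall_mem_Icc_denominator_pos hβ M).and hinward))
  exact ⟨ε, hε, M, hM, hsmall⟩

theorem exists_scaled_solution {p : ℝ} (hp : 0 < p) (hα : 0 < α) (hβ : 0 < βinf)
    (hQ₁ : ContDiff ℝ 1 Q₁) (hQ₂ : ContDiff ℝ 1 Q₂) :
    ∃ (Y : ℝ → ℝ × ℝ) (M C : ℝ), ∀ᶠ u in atTop,
      HasDerivAt Y (scaledField α βinf Q₁ Q₂ (expDecay p u, Y u)) u ∧
      1 / 2 ≤ (Y u).1 ∧ |(Y u).2| ≤ M ∧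
      |(scaledField α βinf Q₁ Q₂ (expDecay p u, Y u)).1| ≤ C * expDecay (2 * p) u := by
  obtain ⟨ε, hε, M, hM, hbox⟩ :=
    exists_pos_forall_mem_Icc_scaledField_inward hα hβ hQ₁ hQ₂
  obtain ⟨K, L, C, hK, hLC⟩ := exists_bounds_scaledField (α := α) (βinf := βinf) (ε := ε)
    (M := M) hQ₁ hQ₂ fun p hp => ((hbox _ hp.1).1 _ hp.2.2).ne'
  have hdecay : ∀ᶠ u in atTop, expDecay p u < ε ∧ C / (2 * p) * expDecay (2 * p) u < 1 / 2 := by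
    refine ((tendsto_expDecay hp).eventually (gt_mem_nhds hε)).and ?_
    have := (tendsto_expDecay (p := 2 * p) (by positivity)).const_mul (C / (2 * p))
    exact this.eventually (gt_mem_nhds (by simp))
  obtain ⟨a, ha, haC⟩ := hdecay.exists
  have hx : ∀ u ≥ a, expDecay p u ∈ Icc 0 ε := fun u hu =>
    ⟨(expDecay_pos p u).le, (expDecay_antitone hp.le hu).trans ha.le⟩
  obtain ⟨Y, hY⟩ := exists_solution_forall_mem_rectangle (p := 2 * p) (B₀ := 1) (K := K)
    (f := fun u y => scaledField α βinf Q₁ Q₂ (expDecay p u, y)) (x₁ := 1 / 2) (x₂ := 3 / 2)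
    (by positivity) (neg_le_self hM.le)
    (fun u hu => by
      simpa only [mul_one, Function.comp_def] using hK.comp
        (LipschitzWith.prodMk_left (expDecay p u)).lipschitzOnWith fun y hy => ⟨hx u hu, hy⟩)
    (fun y hy => hK.continuousOn.comp
      ((continuous_expDecay p).prodMk continuous_const).continuousOn fun u hu => ⟨hx u hu, hy⟩)
    (fun u hu y hy => (hLC (_, y) ⟨hx u hu, hy⟩).1)
    (fun u hu y hy => by
      simpa only [expDecay_sq] using (hLC (expDecay p u, y) ⟨hx u hu, hy⟩).2)
    (by norm_num) (by linarith) (by linarith)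
    (fun u hu B hB => ((hbox _ (hx u hu)).2 B hB).1)
    (fun u hu B hB => ((hbox _ (hx u hu)).2 B hB).2)
  refine ⟨Y, M, C, (eventually_ge_atTop a).mono fun u hu => ?_⟩
  obtain ⟨hmemY, hderiv⟩ := hY u hu
  exact ⟨hderiv, hmemY.1.1, abs_le.2 hmemY.2, by
    simpa only [expDecay_sq] using (hLC (expDecay p u, Y u) ⟨hx u hu, hmemY⟩).2⟩

variable {P₁ P₂ : ℝ → ℝ → ℝ}

/-- The modulation equations for `(b, β̃)` in the variable `u` with `du = b ds`, near `u = +∞`,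
together with the asymptotics `b ∼ m e^{-(1-α)u}` and `β̃ = z = O(e^{-2(1-α)u})`. The equation for
`b` comes from differentiating the constraint `b = (2β/α)(λ/r)`. -/
structure IsReducedSolution (α βinf : ℝ) (P₁ P₂ : ℝ → ℝ → ℝ) (m : ℝ) (b z : ℝ → ℝ) : Prop where
  hasDerivAt_b : ∀ᶠ u in atTop, HasDerivAt b
    (-(1 - α) * b u + P₁ (b u) (z u) + P₂ (b u) (z u) / (βinf + z u)) u
  hasDerivAt_z : ∀ᶠ u in atTop, HasDerivAt z (P₂ (b u) (z u) / b u) u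
  relBigO_b : RelBigO atTop (expDecay (2 * (1 - α))) b fun u => m * expDecay (1 - α) u
  isBigO_z : z =O[atTop] expDecay (2 * (1 - α))

theorem hasDerivAt_mul_of_scaledField {x B v : ℝ → ℝ} {u : ℝ}
    (hP₁ : ∀ x B z, P₁ (x * B) (x * z) = x ^ 3 * Q₁ (x, B, z))
    (hP₂ : ∀ x B z, P₂ (x * B) (x * z) + 2 * (x * B) * (x * z) = x ^ 3 * Q₂ (x, B, z))
    (hx : HasDerivAt x (-(1 - α) * x u) u)
    (hB : HasDerivAt B (scaledField α βinf Q₁ Q₂ (x u, B u, v u)).1 u)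
    (hv : HasDerivAt v (scaledField α βinf Q₁ Q₂ (x u, B u, v u)).2 u)
    (hx0 : x u ≠ 0) (hB0 : B u ≠ 0) :
    HasDerivAt (fun u => x u * B u) (-(1 - α) * (x u * B u) +
      P₁ (x u * B u) (x u * (x u * v u)) +
        P₂ (x u * B u) (x u * (x u * v u)) / (βinf + x u * (x u * v u))) u ∧
    HasDerivAt (fun u => x u * (x u * v u))
      (P₂ (x u * B u) (x u * (x u * v u)) / (x u * B u)) u := by
  rw [hP₁, eq_sub_of_add_eq (hP₂ _ _ _)]
  constructor
  · refine (hx.mul hB).congr_deriv ?_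
    simp only [scaledField, scaledDrift]
    field_simp
    ring
  · refine (hx.mul (hx.mul hv)).congr_deriv ?_
    simp only [scaledField, Pi.mul_apply]
    field_simp
    ring

theorem exists_pos_relBigO_of_deriv_isBigO_expDecay {p c : ℝ} {B B' : ℝ → ℝ} (hp : 0 < p)
    (hB : ∀ᶠ u in atTop, HasDerivAt B (B' u) u) (hB' : B' =O[atTop] expDecay p)
    (hc : 0 < c) (hcB : ∀ᶠ u in atTop, c ≤ B u) :
    ∃ l > 0, RelBigO atTop (expDecay p) B fun _ => l := by
  obtain ⟨l, hl⟩ := exists_isBigO_sub_of_deriv_isBigO_expDecay hp hB hB'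
  have hlim : Tendsto B atTop (𝓝 l) := by
    simpa using (hl.trans_tendsto (tendsto_expDecay hp)).add_const l
  have hlpos : 0 < l := hc.trans_le (ge_of_tendsto hlim hcB)
  exact ⟨l, hlpos, .of_isBigO_sub
    (hl.trans (isBigO_self_const_mul hlpos.ne' (expDecay p) atTop)) fun _ => hlpos.ne'⟩

theorem exists_pos_isReducedSolution (hα0 : 0 < α) (hα1 : α < 1) (hβ : 0 < βinf)
    (hP₁ : VanishesToThirdOrder P₁) (hP₂ : VanishesToThirdOrder fun b z => P₂ b z + 2 * b * z) :
    ∃ m > 0, ∃ b z, IsReducedSolution α βinf P₁ P₂ m b z := by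
  obtain ⟨Q₁, hQ₁, hPQ₁⟩ := hP₁
  obtain ⟨Q₂, hQ₂, hPQ₂⟩ := hP₂
  have hp : 0 < 1 - α := sub_pos.2 hα1
  have h2p : 0 < 2 * (1 - α) := by positivity
  obtain ⟨Y, M, C, hY⟩ := exists_scaled_solution hp hα0 hβ hQ₁ hQ₂
  set x := expDecay (1 - α)
  obtain ⟨l, hl, hBl⟩ := exists_pos_relBigO_of_deriv_isBigO_expDecay h2p
    (hY.mono fun u hu => hu.1.fst) (.of_bound C <| hY.mono fun u hu => by
      simpa [abs_of_pos (expDecay_pos _ _)] using hu.2.2.2) one_half_pos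
    (hY.mono fun u hu => hu.2.1)
  have hz : (fun u => x u * (x u * (Y u).2)) =O[atTop] expDecay (2 * (1 - α)) := by
    have hv : (fun u => (Y u).2) =O[atTop] fun _ => (1 : ℝ) :=
      .of_bound M <| hY.mono fun u hu => by simpa using hu.2.2.1
    refine ((isBigO_refl (expDecay (2 * (1 - α))) atTop).mul hv).congr (fun u => ?_)
      fun u => mul_one _
    rw [← expDecay_sq, sq, mul_assoc]
  have hderiv := hY.mono fun u hu => hasDerivAt_mul_of_scaledField (B := fun u => (Y u).1)
    (v := fun u => (Y u).2) hPQ₁ hPQ₂ (hasDerivAt_expDecay (1 - α) u) hu.1.fst hu.1.snd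
    (expDecay_pos _ u).ne' (one_half_pos.trans_le hu.2.1).ne'
  refine ⟨l, hl, _, _, hderiv.mono fun u hu => hu.1, hderiv.mono fun u hu => hu.2, ?_, hz⟩
  simpa only [mul_comm l] using (RelBigO.refl atTop _ x).mul hBl (tendsto_expDecay h2p)

theorem IsReducedSolution.comp_sub_const {m : ℝ} {b z : ℝ → ℝ}
    (h : IsReducedSolution α βinf P₁ P₂ m b z) (s : ℝ) :
    IsReducedSolution α βinf P₁ P₂ (m * expDecay (1 - α) (-s))
      (fun u => b (u - s)) fun u => z (u - s) := by
  have hs : Tendsto (fun u => u - s) atTop atTop := tendsto_atTop_add_const_right _ (-s) tendsto_id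
  have hdecay : (expDecay (2 * (1 - α)) ∘ fun u => u - s) =O[atTop] expDecay (2 * (1 - α)) :=
    (isBigO_const_mul_self (expDecay (2 * (1 - α)) (-s)) _ _).congr_left
      fun u => (expDecay_sub _ u s).symm
  refine ⟨(hs.eventually h.hasDerivAt_b).mono fun u hu => hu.comp_sub_const u s,
    (hs.eventually h.hasDerivAt_z).mono fun u hu => hu.comp_sub_const u s, ?_,
    (h.isBigO_z.comp_tendsto hs).trans hdecay⟩
  simpa only [Function.comp_def, expDecay_sub (1 - α), mul_assoc] using
    (h.relBigO_b.comp_tendsto hs).mono hdecay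

theorem exists_isReducedSolution (hα0 : 0 < α) (hα1 : α < 1) (hβ : 0 < βinf)
    (hP₁ : VanishesToThirdOrder P₁) (hP₂ : VanishesToThirdOrder fun b z => P₂ b z + 2 * b * z)
    {m : ℝ} (hm : 0 < m) : ∃ b z, IsReducedSolution α βinf P₁ P₂ m b z := by
  obtain ⟨l, hl, b, z, h⟩ := exists_pos_isReducedSolution hα0 hα1 hβ hP₁ hP₂
  set s := Real.log (m / l) / (1 - α) with hs
  have hscale : l * expDecay (1 - α) (-s) = m := by
    have hexp : -(1 - α) * -s = Real.log (m / l) := by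
      rw [hs, neg_mul_neg, mul_div_cancel₀ _ (sub_pos.2 hα1).ne']
    rw [expDecay, hexp, Real.exp_log (by positivity), mul_div_cancel₀ _ hl.ne']
  exact ⟨_, _, hscale ▸ h.comp_sub_const s⟩

end ReducedSystem

section TimeAndPhase

variable {α βinf g : ℝ} {P₁ P₂ : ℝ → ℝ → ℝ} {b z : ℝ → ℝ}

/-- The scaling parameter `λ` along a reduced solution, obtained by solving the constraint
`b = (2β/α)(λ/r)` for `λ`, where `β = β∞ + z` and `r = g e^{-αu}`. -/
noncomputable def scaleParameter (α βinf g : ℝ) (b z : ℝ → ℝ) (u : ℝ) : ℝ :=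
  α * b u * (g * expDecay α u) / (2 * (βinf + z u))

theorem hasDerivAt_scaleParameter {b' z' u : ℝ} (hb : HasDerivAt b b' u) (hz : HasDerivAt z z' u)
    (hb0 : b u ≠ 0) (hβz : βinf + z u ≠ 0) :
    HasDerivAt (scaleParameter α βinf g b z)
      (scaleParameter α βinf g b z u * (b' / b u - α - z' / (βinf + z u))) u := by
  refine (((hb.const_mul α).mul ((hasDerivAt_expDecay α u).const_mul g)).div
    ((hz.const_add βinf).const_mul 2) (mul_ne_zero two_ne_zero hβz)).congr_deriv ?_
  simp only [scaleParameter, Pi.mul_apply]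
  field_simp
  ring

namespace IsReducedSolution

variable {m : ℝ}

theorem eventually_b_pos (h : IsReducedSolution α βinf P₁ P₂ m b z) (hα1 : α < 1) (hm : 0 < m) :
    ∀ᶠ u in atTop, 0 < b u :=
  h.relBigO_b.eventually_pos (fun u => mul_pos hm (expDecay_pos _ u))
    (tendsto_expDecay (by linarith))

theorem relBigO_add_z (h : IsReducedSolution α βinf P₁ P₂ m b z) (hβ : βinf ≠ 0) :
    RelBigO atTop (expDecay (2 * (1 - α))) (fun u => βinf + z u) fun _ => βinf :=
  .of_isBigO_sub ((h.isBigO_z.trans (isBigO_self_const_mul hβ _ _)).congr_left fun u => by ring)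
    fun _ => hβ

theorem eventually_add_z_pos (h : IsReducedSolution α βinf P₁ P₂ m b z) (hα1 : α < 1)
    (hβ : 0 < βinf) : ∀ᶠ u in atTop, 0 < βinf + z u :=
  (h.relBigO_add_z hβ.ne').eventually_pos (fun _ => hβ) (tendsto_expDecay (by linarith))

theorem hasDerivAt_scaleParameter (h : IsReducedSolution α βinf P₁ P₂ m b z) (hα1 : α < 1)
    (hβ : 0 < βinf) (hm : 0 < m) :
    ∀ᶠ u in atTop, HasDerivAt (scaleParameter α βinf g b z)
      (scaleParameter α βinf g b z u * (P₁ (b u) (z u) - b u) / b u) u := by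
  filter_upwards [h.hasDerivAt_b, h.hasDerivAt_z, h.eventually_b_pos hα1 hm,
    h.eventually_add_z_pos hα1 hβ] with u hb hz hb0 hβz
  refine (_root_.hasDerivAt_scaleParameter hb hz hb0.ne' hβz.ne').congr_deriv ?_
  field_simp
  ring

theorem relBigO_scaleParameter (h : IsReducedSolution α βinf P₁ P₂ (2 * βinf / (α * g)) b z)
    (hα0 : 0 < α) (hα1 : α < 1) (hβ : 0 < βinf) (hg : 0 < g) :
    RelBigO atTop (expDecay (2 * (1 - α))) (scaleParameter α βinf g b z) (expDecay 1) := by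
  have hw := tendsto_expDecay (p := 2 * (1 - α)) (by linarith)
  have hprod := ((h.relBigO_b.mul ((h.relBigO_add_z hβ.ne').inv hw) hw).mul
    (.refl _ _ fun u => α * g / 2 * expDecay α u) hw)
  convert hprod using 2 with u u
  · simp only [scaleParameter]
    field_simp
  · have hexp : expDecay 1 u = expDecay (1 - α) u * expDecay α u := by
      rw [expDecay_mul, sub_add_cancel]
    rw [hexp]
    field_simp

theorem exists_time (h : IsReducedSolution α βinf P₁ P₂ (2 * βinf / (α * g)) b z)
    (hα0 : 0 < α) (hα1 : α < 1) (hβ : 0 < βinf) (hg : 0 < g) :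
    ∃ T : ℝ → ℝ, (∀ᶠ u in atTop, HasDerivAt T (scaleParameter α βinf g b z u ^ 2 / b u) u) ∧
      RelBigO atTop (expDecay (2 * (1 - α))) (fun u => -T u)
        fun u => (2 * (1 + α) * βinf / (α * g))⁻¹ * expDecay (1 + α) u := by
  have hw := tendsto_expDecay (p := 2 * (1 - α)) (by linarith)
  have hm : 0 < 2 * βinf / (α * g) := by positivity
  set lam := scaleParameter α βinf g b z
  have hT' : RelBigO atTop (expDecay (2 * (1 - α))) (fun u => lam u ^ 2 / b u)
      fun u => (2 * βinf / (α * g))⁻¹ * expDecay (1 + α) u := by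
    have hlam := h.relBigO_scaleParameter hα0 hα1 hβ hg
    convert (hlam.mul hlam hw).mul (h.relBigO_b.inv hw) hw using 2 with u u
    · rw [sq, div_eq_mul_inv]
    · rw [expDecay_mul, mul_inv, expDecay_inv, mul_left_comm, expDecay_mul]
      ring_nf
  obtain ⟨T, hT⟩ := exists_eventually_hasDerivAt_of_eventually_continuousAt
    (g := fun u => lam u ^ 2 / b u) <| by
      filter_upwards [h.hasDerivAt_b, h.hasDerivAt_scaleParameter hα1 hβ hm,
        h.eventually_b_pos hα1 hm] with u hb hlam hb0
      exact (hlam.continuousAt.pow 2).div hb.continuousAt hb0.ne'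
  obtain ⟨c, hc⟩ := exists_isBigO_sub_of_deriv_relBigO_expDecay (by linarith) (by linarith) hT hT'
  refine ⟨fun u => T u - c, hT.mono fun u hu => hu.sub_const c, .of_isBigO_sub ?_ fun u => ?_⟩
  · have hK : (2 * (1 + α) * βinf / (α * g))⁻¹ = (2 * βinf / (α * g))⁻¹ / (1 + α) := by field_simp
    refine (hc.neg_left.trans (isBigO_self_const_mul (c := (2 * (1 + α) * βinf / (α * g))⁻¹)
      (by positivity) _ _)).congr (fun u => ?_) fun u => ?_
    · rw [hK]
      ring
    · rw [← expDecay_mul, ← mul_assoc]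
  · exact (mul_pos (by positivity) (expDecay_pos _ u)).ne'

theorem exists_phase (h : IsReducedSolution α βinf P₁ P₂ m b z) (hα1 : α < 1) (hm : 0 < m) :
    ∃ G : ℝ → ℝ, (∀ᶠ u in atTop, HasDerivAt G ((1 + (βinf + z u) ^ 2) / b u) u) ∧
      (fun u => G u - (1 + βinf ^ 2) / (m * (1 - α)) * expDecay (-(1 - α)) u)
        =O[atTop] fun _ => (1 : ℝ) := by
  have hp : 0 < 1 - α := sub_pos.2 hα1
  have hw := tendsto_expDecay (p := 2 * (1 - α)) (by linarith)
  have hβz : RelBigO atTop (expDecay (2 * (1 - α))) (fun u => 1 + (βinf + z u) ^ 2)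
      fun _ => 1 + βinf ^ 2 := by
    refine .of_isBigO_sub ?_ fun _ => by positivity
    have hbdd : (fun u => 2 * βinf + z u) =O[atTop] fun _ => (1 : ℝ) :=
      ((h.isBigO_z.trans_tendsto hw).const_add (2 * βinf)).isBigO_one ℝ
    refine (h.isBigO_z.mul (hbdd.trans (isBigO_const_const 1 (by positivity) _))).congr
      (fun u => by ring) fun u => mul_comm _ (1 + βinf ^ 2)
  have hG' : RelBigO atTop (expDecay (2 * (1 - α))) (fun u => (1 + (βinf + z u) ^ 2) / b u)
      fun u => (1 + βinf ^ 2) / m * expDecay (-(1 - α)) u := by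
    convert hβz.mul (h.relBigO_b.inv hw) hw using 2 with u u
    · rw [div_eq_mul_inv]
    · rw [mul_inv, expDecay_inv]
      ring
  obtain ⟨G, hG⟩ := exists_eventually_hasDerivAt_of_eventually_continuousAt
    (g := fun u => (1 + (βinf + z u) ^ 2) / b u) <| by
      filter_upwards [h.hasDerivAt_b, h.hasDerivAt_z, h.eventually_b_pos hα1 hm] with u hb hz hb0
      exact (by have := hz.continuousAt; fun_prop :
        ContinuousAt (fun u => 1 + (βinf + z u) ^ 2) u).div hb.continuousAt hb0.ne'
  obtain ⟨c, hc⟩ := exists_isBigO_sub_of_deriv_relBigO_expDecay (by linarith) (by linarith) hG hG'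
  refine ⟨G, hG, ?_⟩
  have hc1 := hc.trans ((tendsto_expDecay (p := -(1 - α) + 2 * (1 - α)) (by linarith)).isBigO_one ℝ)
  refine (hc1.add (isBigO_const_const c one_ne_zero _)).congr_left fun u => ?_
  field_simp
  ring

end IsReducedSolution

end TimeAndPhase

section OriginalTime

variable {ι : Type*} {l : Filter ι} {α K M p s : ℝ} {f v w τ : ι → ℝ}

theorem relBigO_expDecay_mul_rpow (hK : 0 < K) (hw : Tendsto w l (𝓝 0))
    (hτ : RelBigO l w τ fun i => K⁻¹ * expDecay p (v i)) (s : ℝ) :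
    RelBigO l w (fun i => expDecay (p * s) (v i)) fun i => K ^ s * τ i ^ s := by
  have hpow := ((hτ.rpow (fun i => (mul_pos (inv_pos.2 hK) (expDecay_pos p _)).le) hw s).mul
    (.refl l w fun _ => K ^ s) hw).symm hw
  convert hpow using 2 with i i
  · rw [Real.mul_rpow (inv_pos.2 hK).le (expDecay_pos _ _).le, expDecay_rpow,
      Real.inv_rpow hK.le]
    have := (Real.rpow_pos_of_pos hK s).ne'
    field_simp
  · exact mul_comm _ _

theorem tendsto_nhdsGT_zero_of_relBigO_expDecay (hp : 0 < p) (hK : 0 < K)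
    (hv : Tendsto v l atTop) (hw : Tendsto w l (𝓝 0))
    (hτ : RelBigO l w τ fun i => K⁻¹ * expDecay p (v i)) : Tendsto τ l (𝓝[>] 0) :=
  tendsto_nhdsWithin_iff.2
    ⟨(hτ.isBigO hw).trans_tendsto
      (by simpa using ((tendsto_expDecay hp).comp hv).const_mul K⁻¹),
    hτ.eventually_pos (fun i => mul_pos (inv_pos.2 hK) (expDecay_pos p _)) hw⟩

theorem isBigO_one_abs_log : (fun _ => (1 : ℝ)) =O[𝓝[>] 0] fun τ => |Real.log τ| :=
  (isLittleO_one_left_iff ℝ).2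
    ((tendsto_abs_atBot_atTop.comp Real.tendsto_log_nhdsGT_zero).congr fun τ => by simp) |>.isBigO

theorem tendsto_expDecay_comp_zero (hα1 : α < 1) (hv : Tendsto v l atTop) :
    Tendsto (expDecay (2 * (1 - α)) ∘ v) l (𝓝 0) :=
  (tendsto_expDecay (by linarith)).comp hv

theorem isBigO_expDecay_abs_log_mul_rpow (hα0 : 0 < α) (hα1 : α < 1) (hK : 0 < K)
    (hv : Tendsto v l atTop)
    (hτ : RelBigO l (expDecay (2 * (1 - α)) ∘ v) τ fun i => K⁻¹ * expDecay (1 + α) (v i)) :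
    (expDecay (2 * (1 - α)) ∘ v) =O[l] fun i => |Real.log (τ i)| * τ i ^ ((1 - α) / (1 + α)) := by
  have hw := tendsto_expDecay_comp_zero hα1 hv
  have hτ0 := tendsto_nhdsGT_zero_of_relBigO_expDecay (by linarith) hK hv hw hτ
  have hq : 0 < (1 - α) / (1 + α) := div_pos (by linarith) (by linarith)
  set q := (1 - α) / (1 + α)
  have hsq : (expDecay (2 * (1 - α)) ∘ v) =O[l] fun i => τ i ^ q * τ i ^ q := by
    have hexp : (1 + α) * (q + q) = 2 * (1 - α) := by simp only [q]; field_simp; ring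
    refine ((hexp ▸ (relBigO_expDecay_mul_rpow hK hw hτ (q + q)).isBigO hw).trans
      (isBigO_const_mul_self _ _ _)).congr' .rfl ?_
    filter_upwards [hτ0.eventually self_mem_nhdsWithin] with i hi
    exact Real.rpow_add hi q q
  have hone : (fun i => τ i ^ q) =O[l] fun _ => (1 : ℝ) := by
    have := (hτ0.mono_right nhdsWithin_le_nhds).rpow_const (Or.inr hq.le : (0 : ℝ) ≠ 0 ∨ 0 ≤ q)
    exact this.isBigO_one ℝ
  exact hsq.trans
    ((hone.trans (isBigO_one_abs_log.comp_tendsto hτ0)).mul (isBigO_refl _ _))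

theorem RelBigO.isBigO_sub_rpow (hα0 : 0 < α) (hα1 : α < 1) (hK : 0 < K) (hv : Tendsto v l atTop)
    (hτ : RelBigO l (expDecay (2 * (1 - α)) ∘ v) τ fun i => K⁻¹ * expDecay (1 + α) (v i))
    (hf : RelBigO l (expDecay (2 * (1 - α)) ∘ v) f fun i => M * expDecay ((1 + α) * s) (v i)) :
    (fun i => f i - M * K ^ s * τ i ^ s) =O[l]
      fun i => τ i ^ s * |Real.log (τ i)| * τ i ^ ((1 - α) / (1 + α)) := by
  have hw := tendsto_expDecay_comp_zero hα1 hv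
  have hrel := hf.trans ((RelBigO.refl l _ fun _ => M).mul
    (relBigO_expDecay_mul_rpow hK hw hτ s) hw) hw
  have hsub := hrel.isBigO_sub.trans (((isBigO_const_mul_self (M * K ^ s) (fun i => τ i ^ s) l).mul
    (isBigO_expDecay_abs_log_mul_rpow hα0 hα1 hK hv hτ)).congr_left fun i => by rw [mul_assoc M])
  exact hsub.congr (fun i => by rw [mul_assoc M]) fun i => (mul_assoc _ _ _).symm

theorem isBigO_expDecay_neg_sub_rpow (hα0 : 0 < α) (hα1 : α < 1) (hK : 0 < K)
    (hv : Tendsto v l atTop)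
    (hτ : RelBigO l (expDecay (2 * (1 - α)) ∘ v) τ fun i => K⁻¹ * expDecay (1 + α) (v i)) :
    (fun i => expDecay (-(1 - α)) (v i) -
      K ^ (-((1 - α) / (1 + α))) * τ i ^ (-((1 - α) / (1 + α)))) =O[l] fun _ => (1 : ℝ) := by
  have hw := tendsto_expDecay_comp_zero hα1 hv
  have hexp : (1 + α) * -((1 - α) / (1 + α)) = -(1 - α) := by field_simp
  have hrel := relBigO_expDecay_mul_rpow hK hw hτ (-((1 - α) / (1 + α)))
  rw [hexp] at hrel
  have hbdd := ((tendsto_expDecay (p := 1 - α) (by linarith)).comp hv).isBigO_one ℝ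
  refine ((hrel.symm hw).isBigO_sub.neg_left.congr (fun i => ?_) fun i => ?_).trans hbdd
  · ring
  · simp only [Function.comp_apply, expDecay_mul]
    ring_nf

theorem rpow_mul_mul_rpow_neg_two_div_one_add (hα0 : 0 < α) (hα1 : α < 1) (hK : 0 < K) :
    ((1 - α) / (1 + α)) ^ ((1 - α) / (1 + α)) * (K * ((1 - α) / (1 + α))) ^ (-2 / (1 + α)) =
      (K * ((1 - α) / (1 + α)))⁻¹ * K ^ (-((1 - α) / (1 + α))) := by
  have hq : 0 < (1 - α) / (1 + α) := div_pos (by linarith) (by linarith)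
  have hexp : -2 / (1 + α) = -1 + -((1 - α) / (1 + α)) := by
    field_simp
    ring
  rw [hexp]
  set q := (1 - α) / (1 + α)
  have hqq : q ^ q * q ^ (-q) = 1 := by rw [← Real.rpow_add hq, add_neg_cancel, Real.rpow_zero]
  rw [Real.rpow_add (mul_pos hK hq), Real.rpow_neg_one, Real.mul_rpow hK.le hq.le]
  linear_combination (K * q)⁻¹ * K ^ (-q) * hqq

theorem isBigO_phase_sub_rpow {G : ℝ → ℝ} {A : ℝ} (hα0 : 0 < α) (hα1 : α < 1) (hK : 0 < K)
    (hv : Tendsto v l atTop)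
    (hτ : RelBigO l (expDecay (2 * (1 - α)) ∘ v) τ fun i => K⁻¹ * expDecay (1 + α) (v i))
    (hG : (fun u => G u - A / (K * ((1 - α) / (1 + α))) * expDecay (-(1 - α)) u)
      =O[atTop] fun _ => (1 : ℝ)) :
    (fun i => G (v i) - A * ((1 - α) / (1 + α)) ^ ((1 - α) / (1 + α)) *
      (K * ((1 - α) / (1 + α))) ^ (-2 / (1 + α)) * τ i ^ (-(1 - α) / (1 + α)))
      =O[l] fun _ => (1 : ℝ) := by
  have hexp := (isBigO_expDecay_neg_sub_rpow hα0 hα1 hK hv hτ).const_mul_left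
    (A / (K * ((1 - α) / (1 + α))))
  refine ((hG.comp_tendsto hv).add hexp).congr_left fun i => ?_
  rw [mul_assoc A, rpow_mul_mul_rpow_neg_two_div_one_add hα0 hα1 hK, neg_div]
  simp only [Function.comp_apply]
  ring

theorem div_one_add_mul_rpow (hα0 : 0 < α) (hK : 0 < K) :
    K / (1 + α) * K ^ ((1 - α) / (1 + α)) = 1 / (1 + α) * K ^ (2 / (1 + α)) := by
  have hexp : 2 / (1 + α) = 1 + (1 - α) / (1 + α) := by
    field_simp
    ring
  rw [hexp, Real.rpow_add hK, Real.rpow_one]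
  ring

end OriginalTime

section RingCollapse

variable {α βinf g : ℝ} {P₁ P₂ : ℝ → ℝ → ℝ} {lam b bt r γ : ℝ → ℝ}

/-- The modulation system at time `t`, written in the original time by means of `ds/dt = 1/λ²`.
The variable `bt` is `β̃ = β - β∞`. -/
structure IsModulationSolutionAt (α βinf : ℝ) (P₁ P₂ : ℝ → ℝ → ℝ) (lam b bt r γ : ℝ → ℝ)
    (t : ℝ) : Prop where
  lam_pos : 0 < lam t
  r_pos : 0 < r t
  b_eq : b t = 2 * (βinf + bt t) / α * (lam t / r t)
  hasDerivAt_lam : HasDerivAt lam ((P₁ (b t) (bt t) - b t) / lam t) t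
  hasDerivAt_r : HasDerivAt r (-2 * (βinf + bt t) / lam t) t
  hasDerivAt_bt : HasDerivAt bt (P₂ (b t) (bt t) / lam t ^ 2) t
  hasDerivAt_γ : HasDerivAt γ ((1 + (βinf + bt t) ^ 2) / lam t ^ 2) t

/-- The blow-up laws of the collapsing ring regime as `t ↑ 0`, with `g = g∞`. -/
structure HasRingAsymptotics (α βinf g : ℝ) (lam b bt r γ : ℝ → ℝ) : Prop where
  isBigO_b : (fun t => b t - 1 / (1 + α) * (2 * (1 + α) * βinf / (α * g)) ^ (2 / (1 + α)) *
      |t| ^ ((1 - α) / (1 + α))) =O[𝓝[<] 0]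
    fun t => |t| ^ ((1 - α) / (1 + α)) * |Real.log (abs t)| * |t| ^ ((1 - α) / (1 + α))
  isBigO_lam : (fun t => lam t - (2 * (1 + α) * βinf / (α * g)) ^ (1 / (1 + α)) *
      |t| ^ (1 / (1 + α))) =O[𝓝[<] 0]
    fun t => |t| ^ (1 / (1 + α)) * |Real.log (abs t)| * |t| ^ ((1 - α) / (1 + α))
  isBigO_r : (fun t => r t - g * (2 * (1 + α) * βinf / (α * g)) ^ (α / (1 + α)) *
      |t| ^ (α / (1 + α))) =O[𝓝[<] 0]
    fun t => |t| ^ (α / (1 + α)) * |Real.log (abs t)| * |t| ^ ((1 - α) / (1 + α))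
  isBigO_bt : bt =O[𝓝[<] 0] fun t => |t| ^ (2 * (1 - α) / (1 + α))
  isBigO_γ : (fun t => γ t - (1 + βinf ^ 2) * ((1 - α) / (1 + α)) ^ ((1 - α) / (1 + α)) *
      (2 * (1 - α) * βinf / (α * g)) ^ (-2 / (1 + α)) * |t| ^ (-(1 - α) / (1 + α))) =O[𝓝[<] 0]
    fun t => 1 + |Real.log (abs t)|

theorem isModulationSolutionAt_comp {z U G : ℝ → ℝ} {t : ℝ} (hα0 : 0 < α) (hg : 0 < g)
    (hb : 0 < b (U t)) (hβz : 0 < βinf + z (U t))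
    (hlam : HasDerivAt (scaleParameter α βinf g b z)
      (scaleParameter α βinf g b z (U t) * (P₁ (b (U t)) (z (U t)) - b (U t)) / b (U t)) (U t))
    (hz : HasDerivAt z (P₂ (b (U t)) (z (U t)) / b (U t)) (U t))
    (hG : HasDerivAt G ((1 + (βinf + z (U t)) ^ 2) / b (U t)) (U t))
    (hU : HasDerivAt U (scaleParameter α βinf g b z (U t) ^ 2 / b (U t))⁻¹ t) :
    IsModulationSolutionAt α βinf P₁ P₂ (scaleParameter α βinf g b z ∘ U) (b ∘ U) (z ∘ U)
      (fun t => g * expDecay α (U t)) (G ∘ U) t := by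
  have hr : 0 < g * expDecay α (U t) := mul_pos hg (expDecay_pos _ _)
  have hlam0 : 0 < scaleParameter α βinf g b z (U t) := by
    unfold scaleParameter
    positivity
  have hbr : b (U t) * (α * (g * expDecay α (U t))) =
      2 * (βinf + z (U t)) * scaleParameter α βinf g b z (U t) := by
    unfold scaleParameter
    field_simp
  refine ⟨hlam0, hr, ?_, (hlam.comp t hU).congr_deriv ?_,
    (((hasDerivAt_expDecay α (U t)).const_mul g).comp t hU).congr_deriv ?_,
    (hz.comp t hU).congr_deriv ?_, (hG.comp t hU).congr_deriv ?_⟩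
  · simp only [Function.comp_apply]
    rw [div_mul_div_comm, eq_div_iff (by positivity)]
    linarith
  · simp only [Function.comp_apply]
    field_simp
  · simp only [Function.comp_apply]
    field_simp
    linarith
  · simp only [Function.comp_apply]
    field_simp
  · simp only [Function.comp_apply]
    field_simp

theorem IsReducedSolution.hasRingAsymptotics_comp {z U G : ℝ → ℝ}
    (h : IsReducedSolution α βinf P₁ P₂ (2 * βinf / (α * g)) b z)
    (hα0 : 0 < α) (hα1 : α < 1) (hβ : 0 < βinf) (hg : 0 < g)
    (hG : (fun u => G u - (1 + βinf ^ 2) / (2 * βinf / (α * g) * (1 - α)) * expDecay (-(1 - α)) u)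
      =O[atTop] fun _ => (1 : ℝ))
    (hU : Tendsto U (𝓝[<] 0) atTop)
    (ht : RelBigO (𝓝[<] 0) (expDecay (2 * (1 - α)) ∘ U) abs
      fun t => (2 * (1 + α) * βinf / (α * g))⁻¹ * expDecay (1 + α) (U t)) :
    HasRingAsymptotics α βinf g (scaleParameter α βinf g b z ∘ U) (b ∘ U) (z ∘ U)
      (fun t => g * expDecay α (U t)) (G ∘ U) := by
  have hK : 0 < 2 * (1 + α) * βinf / (α * g) := by positivity
  have hs : ∀ p : ℝ, (1 + α) * (p / (1 + α)) = p := fun p => by field_simp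
  have hm : 2 * βinf / (α * g) = 2 * (1 + α) * βinf / (α * g) / (1 + α) := by field_simp
  have hKq : 2 * (1 - α) * βinf / (α * g) =
    2 * (1 + α) * βinf / (α * g) * ((1 - α) / (1 + α)) := by field_simp
  have hmKq : 2 * βinf / (α * g) * (1 - α) =
    2 * (1 + α) * βinf / (α * g) * ((1 - α) / (1 + α)) := by field_simp
  have hb := h.relBigO_b.comp_tendsto hU
  have hlam := (h.relBigO_scaleParameter hα0 hα1 hβ hg).comp_tendsto hU
  rw [hm] at hb
  rw [hmKq] at hG
  set K := 2 * (1 + α) * βinf / (α * g)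
  refine ⟨?_, ?_, ?_, ?_, ?_⟩
  · rw [← div_one_add_mul_rpow hα0 hK]
    exact RelBigO.isBigO_sub_rpow hα0 hα1 hK hU ht (by rw [hs]; exact hb)
  · rw [← one_mul (K ^ (1 / (1 + α)))]
    exact RelBigO.isBigO_sub_rpow hα0 hα1 hK hU ht (by simp only [hs, one_mul]; exact hlam)
  · exact RelBigO.isBigO_sub_rpow hα0 hα1 hK hU ht (by rw [hs]; exact .refl _ _ _)
  · have hpow := relBigO_expDecay_mul_rpow hK (tendsto_expDecay_comp_zero hα1 hU) ht
      (2 * (1 - α) / (1 + α))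
    rw [hs] at hpow
    exact (h.isBigO_z.comp_tendsto hU).trans
      ((hpow.isBigO (tendsto_expDecay_comp_zero hα1 hU)).trans (isBigO_const_mul_self _ _ _))
  · rw [hKq]
    refine (isBigO_phase_sub_rpow hα0 hα1 hK hU ht hG).trans (.of_norm_le fun t => ?_)
    rw [norm_one]
    exact le_add_of_nonneg_right (abs_nonneg _)

theorem exists_ring_collapse (hα0 : 0 < α) (hα1 : α < 1) (hβ : 0 < βinf) (hg : 0 < g)
    (hP₁ : VanishesToThirdOrder P₁) (hP₂ : VanishesToThirdOrder fun b z => P₂ b z + 2 * b * z) :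
    ∃ lam b bt r γ : ℝ → ℝ, (∀ᶠ t in 𝓝[<] 0, IsModulationSolutionAt α βinf P₁ P₂ lam b bt r γ t) ∧
      HasRingAsymptotics α βinf g lam b bt r γ := by
  have hm : 0 < 2 * βinf / (α * g) := by positivity
  obtain ⟨b, z, h⟩ := exists_isReducedSolution hα0 hα1 hβ hP₁ hP₂ hm
  obtain ⟨T, hT, hTasymp⟩ := h.exists_time hα0 hα1 hβ hg
  obtain ⟨G, hG, hGasymp⟩ := h.exists_phase hα1 hm
  have hlampos := (h.relBigO_scaleParameter hα0 hα1 hβ hg).eventually_pos (expDecay_pos 1)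
    (tendsto_expDecay (by linarith))
  have hTlim : Tendsto T atTop (𝓝 0) := by
    have hexp := (tendsto_expDecay (p := 1 + α) (by linarith)).const_mul
      (2 * (1 + α) * βinf / (α * g))⁻¹
    rw [mul_zero] at hexp
    simpa using ((hTasymp.isBigO (tendsto_expDecay (by linarith))).trans_tendsto hexp).neg
  obtain ⟨U, hU, hUinv⟩ := exists_inverse_of_deriv_pos_of_tendsto hT
    ((hlampos.and (h.eventually_b_pos hα1 hm)).mono fun u hu => div_pos (pow_pos hu.1 2) hu.2) hTlim
  refine ⟨_, _, _, _, _, ?_, h.hasRingAsymptotics_comp hα0 hα1 hβ hg hGasymp hU ?_⟩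
  · filter_upwards [hUinv, hU.eventually h.hasDerivAt_z, hU.eventually hG,
      hU.eventually (h.eventually_b_pos hα1 hm), hU.eventually (h.eventually_add_z_pos hα1 hβ),
      hU.eventually (h.hasDerivAt_scaleParameter hα1 hβ hm)] with t hUt hzt hGt hbt hβzt hlamt
    exact isModulationSolutionAt_comp hα0 hg hbt hβzt hlamt hzt hGt hUt.2
  · refine (hTasymp.comp_tendsto hU).congr_left ?_
    filter_upwards [hUinv, self_mem_nhdsWithin] with t hUt ht
    simp [hUt.1, abs_of_neg (mem_Iio.1 ht)]

end RingCollapse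

/-- The cofactor of `x ^ 3` in `∑ c j l * (x * B) ^ j * (x * z) ^ l`, the sum being taken over the
monomials of total degree between `3` and `k - 1`. -/
noncomputable def cubicCofactor (k : ℕ) (c : ℕ → ℕ → ℝ) (x B z : ℝ) : ℝ :=
  ∑ j ∈ Finset.range k, ∑ l ∈ Finset.range k,
    if 3 ≤ j + l ∧ j + l ≤ k - 1 then c j l * x ^ (j + l - 3) * B ^ j * z ^ l else 0

theorem sum_eq_cube_mul_cubicCofactor (k : ℕ) (c : ℕ → ℕ → ℝ) (x B z : ℝ) :
    (∑ j ∈ Finset.range k, ∑ l ∈ Finset.range k,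
      if 3 ≤ j + l ∧ j + l ≤ k - 1 then c j l * (x * B) ^ j * (x * z) ^ l else 0) =
      x ^ 3 * cubicCofactor k c x B z := by
  simp only [cubicCofactor, Finset.mul_sum]
  refine Finset.sum_congr rfl fun j _ => Finset.sum_congr rfl fun l _ => ?_
  split_ifs with h
  · have : x ^ j * x ^ l = x ^ 3 * x ^ (j + l - 3) := by
      rw [← pow_add, ← pow_add]
      congr 1
      omega
    calc c j l * (x * B) ^ j * (x * z) ^ l = c j l * (x ^ j * x ^ l) * B ^ j * z ^ l := by ring
      _ = _ := by rw [this]; ring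
  · simp

theorem contDiff_cubicCofactor (k : ℕ) (c : ℕ → ℕ → ℝ) :
    ContDiff ℝ 1 fun p : ℝ × ℝ × ℝ => cubicCofactor k c p.1 p.2.1 p.2.2 := by
  unfold cubicCofactor
  refine ContDiff.sum fun j _ => ContDiff.sum fun l _ => ?_
  split_ifs
  · fun_prop
  · fun_prop

theorem vanishesToThirdOrder_sum (k : ℕ) (c : ℕ → ℕ → ℝ) :
    VanishesToThirdOrder fun b bt => ∑ j ∈ Finset.range k, ∑ l ∈ Finset.range k,
      if 3 ≤ j + l ∧ j + l ≤ k - 1 then c j l * b ^ j * bt ^ l else 0 :=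
  ⟨_, contDiff_cubicCofactor k c, sum_eq_cube_mul_cubicCofactor k c⟩

theorem stmt15_general {α βinf g : ℝ} {P₁ P₂ : ℝ → ℝ → ℝ} (hα0 : 0 < α) (hα1 : α < 1)
    (hβ : 0 < βinf) (hg : 0 < g) (hP₁ : VanishesToThirdOrder P₁)
    (hP₂ : VanishesToThirdOrder fun b bt => P₂ b bt + 2 * b * bt) :
    ∃ te C : ℝ, te < 0 ∧ 0 < C ∧
      ∃ lam b bt r γ : ℝ → ℝ,
        (∀ t ∈ Set.Ico te (0 : ℝ), 0 < lam t ∧ 0 < r t) ∧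
        (∀ t ∈ Set.Ico te (0 : ℝ), b t = 2 * (βinf + bt t) / α * (lam t / r t)) ∧
        (∀ t ∈ Set.Ico te (0 : ℝ),
          HasDerivAt lam ((P₁ (b t) (bt t) - b t) / lam t) t) ∧
        (∀ t ∈ Set.Ico te (0 : ℝ),
          HasDerivAt r (-2 * (βinf + bt t) / lam t) t) ∧
        (∀ t ∈ Set.Ico te (0 : ℝ),
          HasDerivAt bt (P₂ (b t) (bt t) / lam t ^ 2) t) ∧
        (∀ t ∈ Set.Ico te (0 : ℝ),
          HasDerivAt γ ((1 + (βinf + bt t) ^ 2) / lam t ^ 2) t) ∧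
        (∀ t ∈ Set.Ico te (0 : ℝ),
          |b t - 1 / (1 + α) * (2 * (1 + α) * βinf / (α * g)) ^ (2 / (1 + α))
              * (abs t) ^ ((1 - α) / (1 + α))|
            ≤ C * (abs t) ^ ((1 - α) / (1 + α)) * |Real.log (abs t)|
                * (abs t) ^ ((1 - α) / (1 + α))) ∧
        (∀ t ∈ Set.Ico te (0 : ℝ),
          |lam t - (2 * (1 + α) * βinf / (α * g)) ^ (1 / (1 + α))
              * (abs t) ^ (1 / (1 + α))|
            ≤ C * (abs t) ^ (1 / (1 + α)) * |Real.log (abs t)|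
                * (abs t) ^ ((1 - α) / (1 + α))) ∧
        (∀ t ∈ Set.Ico te (0 : ℝ),
          |r t - g * (2 * (1 + α) * βinf / (α * g)) ^ (α / (1 + α))
              * (abs t) ^ (α / (1 + α))|
            ≤ C * (abs t) ^ (α / (1 + α)) * |Real.log (abs t)|
                * (abs t) ^ ((1 - α) / (1 + α))) ∧
        (∀ t ∈ Set.Ico te (0 : ℝ), |bt t| ≤ C * (abs t) ^ (2 * (1 - α) / (1 + α))) ∧
        (∀ t ∈ Set.Ico te (0 : ℝ),
          |γ t - (1 + βinf ^ 2) * ((1 - α) / (1 + α)) ^ ((1 - α) / (1 + α))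
              * (2 * (1 - α) * βinf / (α * g)) ^ (-2 / (1 + α))
              * (abs t) ^ (-(1 - α) / (1 + α))|
            ≤ C * (1 + |Real.log (abs t)|)) := by
  obtain ⟨lam, b, bt, r, γ, hsol, h⟩ := exists_ring_collapse hα0 hα1 hβ hg hP₁ hP₂
  obtain ⟨C, hC, hb, hlam, hr, hbt, hγ⟩ := ((eventually_gt_atTop 0).and
    ((isBigO_iff_eventually.1 h.isBigO_b).and ((isBigO_iff_eventually.1 h.isBigO_lam).and
    ((isBigO_iff_eventually.1 h.isBigO_r).and ((isBigO_iff_eventually.1 h.isBigO_bt).and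
    (isBigO_iff_eventually.1 h.isBigO_γ)))))).exists
  obtain ⟨te, hte, hmem⟩ := mem_nhdsLT_iff_exists_Ico_subset.1
    (hsol.and (hb.and (hlam.and (hr.and (hbt.and hγ)))))
  have hbound : ∀ {x y : ℝ}, 0 ≤ y → ‖x‖ ≤ C * ‖y‖ → |x| ≤ C * y := fun hy h => by
    rwa [Real.norm_of_nonneg hy] at h
  refine ⟨te, C, hte, hC, lam, b, bt, r, γ,
    fun t ht => ⟨(hmem ht).1.lam_pos, (hmem ht).1.r_pos⟩, fun t ht => (hmem ht).1.b_eq,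
    fun t ht => (hmem ht).1.hasDerivAt_lam, fun t ht => (hmem ht).1.hasDerivAt_r,
    fun t ht => (hmem ht).1.hasDerivAt_bt, fun t ht => (hmem ht).1.hasDerivAt_γ,
    fun t ht => ?_, fun t ht => ?_, fun t ht => ?_, fun t ht => ?_, fun t ht => ?_⟩
  all_goals obtain ⟨-, hb, hlam, hr, hbt, hγ⟩ := hmem ht
  · simpa only [mul_assoc] using hbound (by positivity) hb
  · simpa only [mul_assoc] using hbound (by positivity) hlam
  · simpa only [mul_assoc] using hbound (by positivity) hr
  · exact hbound (by positivity) hbt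
  · exact hbound (by positivity) hγ

/-- integration of the exact modulation system, original time:
for `0 < α < 1`, `β∞ > 0` and polynomials `P₁, P₂` of the indicated form, there exist
`t_e < 0` and `g∞ > 0` with `|g∞ - 1|` small, and a solution `(λ_e, b_e, β̃_e, r_e, γ_e)`
on `[t_e, 0)` of the system (written in the time `t`, with `ds/dt = 1/λ²`, so that
`λ_s/λ + b = λλ_t + b = P₁` gives `λ_t = (P₁ - b)/λ`, `r_s/λ + 2β = 0` gives
`r_t = -2β/λ`, `β̃_s = P₂` gives `β̃_t = P₂/λ²`, `γ_s = 1 + β²` gives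
`γ_t = (1+β²)/λ²`, with `b = (2β/α)(λ/r)`, `β = β∞ + β̃`), satisfying the asymptotic
blow-up laws of the collapsing ring regime as `t ↑ 0`. -/
theorem stmt15 (α βinf : ℝ) (hα0 : 0 < α) (hα1 : α < 1) (hβ : 0 < βinf)
    (k : ℕ) (hk : 5 ≤ k) (c₁ c₂ : ℕ → ℕ → ℝ) (P₁ P₂ : ℝ → ℝ → ℝ)
    (hP₁ : ∀ b bt : ℝ, P₁ b bt =
      ∑ j ∈ Finset.range k, ∑ l ∈ Finset.range k,
        if 3 ≤ j + l ∧ j + l ≤ k - 1 then c₁ j l * b ^ j * bt ^ l else 0)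
    (hP₂ : ∀ b bt : ℝ, P₂ b bt = -2 * b * bt +
      ∑ j ∈ Finset.range k, ∑ l ∈ Finset.range k,
        if 3 ≤ j + l ∧ j + l ≤ k - 1 then c₂ j l * b ^ j * bt ^ l else 0) :
    ∃ (te ginf C : ℝ), te < 0 ∧ 0 < ginf ∧ |ginf - 1| ≤ 1 / 2 ∧ 0 < C ∧
      ∃ lam b bt r γ : ℝ → ℝ,
        (∀ t ∈ Set.Ico te (0 : ℝ), 0 < lam t ∧ 0 < r t) ∧
        (∀ t ∈ Set.Ico te (0 : ℝ), b t = 2 * (βinf + bt t) / α * (lam t / r t)) ∧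
        (∀ t ∈ Set.Ico te (0 : ℝ),
          HasDerivAt lam ((P₁ (b t) (bt t) - b t) / lam t) t) ∧
        (∀ t ∈ Set.Ico te (0 : ℝ),
          HasDerivAt r (-2 * (βinf + bt t) / lam t) t) ∧
        (∀ t ∈ Set.Ico te (0 : ℝ),
          HasDerivAt bt (P₂ (b t) (bt t) / lam t ^ 2) t) ∧
        (∀ t ∈ Set.Ico te (0 : ℝ),
          HasDerivAt γ ((1 + (βinf + bt t) ^ 2) / lam t ^ 2) t) ∧
        (∀ t ∈ Set.Ico te (0 : ℝ),
          |b t - 1 / (1 + α) * (2 * (1 + α) * βinf / (α * ginf)) ^ (2 / (1 + α))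
              * (abs t) ^ ((1 - α) / (1 + α))|
            ≤ C * (abs t) ^ ((1 - α) / (1 + α)) * |Real.log (abs t)|
                * (abs t) ^ ((1 - α) / (1 + α))) ∧
        (∀ t ∈ Set.Ico te (0 : ℝ),
          |lam t - (2 * (1 + α) * βinf / (α * ginf)) ^ (1 / (1 + α))
              * (abs t) ^ (1 / (1 + α))|
            ≤ C * (abs t) ^ (1 / (1 + α)) * |Real.log (abs t)|
                * (abs t) ^ ((1 - α) / (1 + α))) ∧
        (∀ t ∈ Set.Ico te (0 : ℝ),
          |r t - ginf * (2 * (1 + α) * βinf / (α * ginf)) ^ (α / (1 + α))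
              * (abs t) ^ (α / (1 + α))|
            ≤ C * (abs t) ^ (α / (1 + α)) * |Real.log (abs t)|
                * (abs t) ^ ((1 - α) / (1 + α))) ∧
        (∀ t ∈ Set.Ico te (0 : ℝ), |bt t| ≤ C * (abs t) ^ (2 * (1 - α) / (1 + α))) ∧
        (∀ t ∈ Set.Ico te (0 : ℝ),
          |γ t - (1 + βinf ^ 2) * ((1 - α) / (1 + α)) ^ ((1 - α) / (1 + α))
              * (2 * (1 - α) * βinf / (α * ginf)) ^ (-2 / (1 + α))
              * (abs t) ^ (-(1 - α) / (1 + α))|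
            ≤ C * (1 + |Real.log (abs t)|)) := by
  obtain ⟨te, C, hte, hC, h⟩ := stmt15_general (P₁ := P₁) (P₂ := P₂) hα0 hα1 hβ one_pos
    (funext₂ hP₁ ▸ vanishesToThirdOrder_sum k c₁)
    (by simpa [hP₂, neg_add_cancel_comm] using vanishesToThirdOrder_sum k c₂)
  exact ⟨te, 1, C, hte, one_pos, by norm_num, hC, h⟩
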